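/- Let s, t ∈ ℂ satisfy t³ − 21t + 37 = 0 and s^{18} = 26220t² + 67488t − 376912. In R = ℂ[u,v,x,y] define the 2×2 matrix d¹ = [[a, b], [c, d]] with a = v − ((t² − 10t + 19)/2)·(s·u)⁹ + (t − 2)·y·(s·u)⁵ + y²·(s·u), b = −x + (2t − 5)·(s·u)⁶ + y·(s·u)², c = x² + y³ + (2t − 5)²·(s·u)^{12} + (2t − 5)·x·(s·u)⁶ + 2(2t − 5)·y·(s·u)⁸ + x·y·(s·u)² + y²·(s·u)⁴, d = −v − ((t² − 10t + 19)/2)·(s·u)⁹ + (t − 2)·y·(s·u)⁵ + y²·(s·u). Then det(d¹) = x³ + x·y³ − u^{18} − v². Consequently, with d⁰ the adjugate of d¹, the pair (d⁰, d¹) is a rank-two matrix factorisation of V^{(E₇)}(x,y) − V^{(A_{17})}(u,v) = x³ + x·y³ − u^{18} − v². Moreover, each entry of d¹ is weighted homogeneous for the weights w(u) = 1/9, w(v) = 1, w(x) = 2/3, w(y) = 4/9, the entries having degrees [[1, 2/3], [4/3, 1]] respectively. -/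

import Mathlib

/-!
Cut the `E₇` potential along a curve `x = b(y)`: the difference `V(x, y) - V(b, y)` is divisible by
`x - b`, so a `2 × 2` matrix with diagonal `v + a`, `-v + a` and with `b - x` and the cofactor of
`x - b` off the diagonal has determinant `V(x, y) - v² + (a² - V(b, y))`. It remains to choose `a`
and `b` with `V(b, y) = a² + u¹⁸`. With `z = s u` and `q = (t² - 10 t + 19) / 2`, the ansatz
`b = (2 t - 5) z⁶ + y z²`, `a = -q z⁹ + (t - 2) y z⁵ + y² z` makes `V(b, y) - a²` collapse to
`(t³ - 21 t + 37) y z¹⁴ + ((2 t - 5)³ - q²) z¹⁸`. The cubic equation for `t` kills the first term,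
and the value of `s¹⁸` is the inverse of `(2 t - 5)³ - q²` modulo that cubic. If `z` has degree `δ`
and `y` has degree `4δ`, then `b` and `a` are homogeneous of degrees `6δ` and `9δ`, whence the
grading of the matrix, with `δ = 1/9`.
-/

open MvPolynomial

noncomputable section

/-- The polynomial ring `R = ℂ[u,v,x,y]`. -/
abbrev R4 : Type := MvPolynomial (Fin 4) ℂ

def u : R4 := X 0
def v : R4 := X 1
def x : R4 := X 2
def y : R4 := X 3

/-- A polynomial is weighted homogeneous of degree `q` for the weights `w`. -/
def WHom (w : Fin 4 → ℚ) (q : ℚ) (p : R4) : Prop :=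
  ∀ m ∈ p.support, (∑ i : Fin 4, (m i : ℚ) * w i) = q

/-- The matrix `d¹` of the E₇ orbifold equivalence. -/
def dE7 (s t : ℂ) : Matrix (Fin 2) (Fin 2) R4 :=
  !![v - C ((t^2 - 10*t + 19)/2) * (C s * u) ^ 9 + C (t - 2) * y * (C s * u) ^ 5
       + y ^ 2 * (C s * u),
     -x + C (2*t - 5) * (C s * u) ^ 6 + y * (C s * u) ^ 2;
     x ^ 2 + y ^ 3 + C ((2*t - 5)^2) * (C s * u) ^ 12 + C (2*t - 5) * x * (C s * u) ^ 6
       + C (2*(2*t - 5)) * y * (C s * u) ^ 8 + x * y * (C s * u) ^ 2 + y ^ 2 * (C s * u) ^ 4,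
     -v - C ((t^2 - 10*t + 19)/2) * (C s * u) ^ 9 + C (t - 2) * y * (C s * u) ^ 5
       + y ^ 2 * (C s * u)]

/-- The `E₇` potential `V(x, y) = x³ + x y³`, at elements of an arbitrary commutative ring. -/
def potentialE7 {S : Type*} [CommRing S] (x y : S) : S := x ^ 3 + x * y ^ 3

/-- The matrix that factorises `V(x, y) - v²` up to the error `a² - V(b, y)`, for the `E₇` potential
`V`; its lower left entry is the cofactor of `x - b` in `V(x, y) - V(b, y)`. -/
def matrixE7 {S : Type*} [CommRing S] (a b v x y : S) : Matrix (Fin 2) (Fin 2) S :=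
  !![v + a, -x + b;
     x ^ 2 + x * b + b ^ 2 + y ^ 3, -v + a]

/-- The `x`-coordinate of the family of curves along which the `E₇` potential is, under conditions
on `t` and `q`, a square plus a multiple of `z¹⁸`. -/
def curveX {S : Type*} [CommRing S] (t y z : S) : S := (2 * t - 5) * z ^ 6 + y * z ^ 2

/-- The `v`-coordinate of the same family, i.e. the element whose square is split off. The parameter
`q` stands for `(t² - 10 t + 19) / 2`, kept separate so that `2` need not be invertible. -/
def curveV {S : Type*} [CommRing S] (t q y z : S) : S :=
  -(q * z ^ 9) + (t - 2) * y * z ^ 5 + y ^ 2 * z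

section Determinant

variable {S : Type*} [CommRing S]

theorem potentialE7_sub_potentialE7 (x b y : S) :
    potentialE7 x y - potentialE7 b y = (x - b) * (x ^ 2 + x * b + b ^ 2 + y ^ 3) := by
  unfold potentialE7
  ring

theorem det_matrixE7 (a b v x y : S) :
    (matrixE7 a b v x y).det = potentialE7 x y - v ^ 2 + (a ^ 2 - potentialE7 b y) := by
  rw [matrixE7, Matrix.det_fin_two_of]
  linear_combination -potentialE7_sub_potentialE7 x b y

theorem potentialE7_curveX {t q : S} (hq : 2 * q = t ^ 2 - 10 * t + 19) (y z : S) :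
    potentialE7 (curveX t y z) y = curveV t q y z ^ 2
      + (t ^ 3 - 21 * t + 37) * y * z ^ 14 + ((2 * t - 5) ^ 3 - q ^ 2) * z ^ 18 := by
  unfold potentialE7 curveX curveV
  linear_combination (y ^ 2 * z ^ 10 + (t - 2) * y * z ^ 14) * hq

theorem det_matrixE7_curve {s t q : S} (hq : 2 * q = t ^ 2 - 10 * t + 19)
    (ht : t ^ 3 - 21 * t + 37 = 0) (hs : s ^ 18 * ((2 * t - 5) ^ 3 - q ^ 2) = 1) (u v x y : S) :
    (matrixE7 (curveV t q y (s * u)) (curveX t y (s * u)) v x y).det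
      = x ^ 3 + x * y ^ 3 - u ^ 18 - v ^ 2 := by
  have hcurve : potentialE7 (curveX t y (s * u)) y = curveV t q y (s * u) ^ 2 + u ^ 18 := by
    rw [potentialE7_curveX hq]
    linear_combination y * (s * u) ^ 14 * ht + u ^ 18 * hs
  rw [det_matrixE7, hcurve, potentialE7]
  ring

theorem pow_eighteen_mul_eq_one [IsDomain S] (h2 : (2 : S) ≠ 0) {s t q : S}
    (hq : 2 * q = t ^ 2 - 10 * t + 19) (ht : t ^ 3 - 21 * t + 37 = 0)
    (hs : s ^ 18 = 26220 * t ^ 2 + 67488 * t - 376912) :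
    s ^ 18 * ((2 * t - 5) ^ 3 - q ^ 2) = 1 := by
  have hreduce : 2 ^ 2 * ((2 * t - 5) ^ 3 - q ^ 2) = -(399 * t ^ 2 - 2109 * t + 2785) := by
    linear_combination (52 - t) * ht - (2 * q + t ^ 2 - 10 * t + 19) * hq
  have hinverse : (26220 * t ^ 2 + 67488 * t - 376912) * -(399 * t ^ 2 - 2109 * t + 2785)
      = 2 ^ 2 := by
    linear_combination (28370268 - 10461780 * t) * ht
  refine mul_left_cancel₀ (pow_ne_zero 2 h2) ?_
  rw [mul_left_comm, hreduce, hs, hinverse, mul_one]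

end Determinant

section Homogeneity

variable {σ k M : Type*} [CommRing k] [AddCommMonoid M] {w : σ → M}

theorem isWeightedHomogeneous_curveX (t : k) {y z : MvPolynomial σ k} {δ : M}
    (hy : IsWeightedHomogeneous w y (4 • δ)) (hz : IsWeightedHomogeneous w z δ) :
    IsWeightedHomogeneous w (curveX (C t) y z) (6 • δ) := by
  have hz6 : IsWeightedHomogeneous w (C (2 * t - 5) * z ^ 6) (6 • δ) := (hz.pow 6).C_mul _
  have hyz2 : IsWeightedHomogeneous w (y * z ^ 2) (6 • δ) := by
    convert hy.mul (hz.pow 2) using 1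
    abel
  simpa only [curveX, map_sub, map_mul, map_ofNat] using hz6.add hyz2

theorem isWeightedHomogeneous_curveV (t q : k) {y z : MvPolynomial σ k} {δ : M}
    (hy : IsWeightedHomogeneous w y (4 • δ)) (hz : IsWeightedHomogeneous w z δ) :
    IsWeightedHomogeneous w (curveV (C t) (C q) y z) (9 • δ) := by
  have hz9 : IsWeightedHomogeneous w (-(C q * z ^ 9)) (9 • δ) := ((hz.pow 9).C_mul q).neg
  have hyz5 : IsWeightedHomogeneous w (C (t - 2) * y * z ^ 5) (9 • δ) := by
    convert (hy.C_mul (t - 2)).mul (hz.pow 5) using 1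
    abel
  have hy2z : IsWeightedHomogeneous w (y ^ 2 * z) (9 • δ) := by
    convert (hy.pow 2).mul hz using 1
    abel
  simpa only [curveV, map_sub, map_ofNat] using (hz9.add hyz5).add hy2z

theorem isWeightedHomogeneous_matrixE7 {a b v x y : MvPolynomial σ k} {m n : M}
    (ha : IsWeightedHomogeneous w a m) (hv : IsWeightedHomogeneous w v m)
    (hb : IsWeightedHomogeneous w b n) (hx : IsWeightedHomogeneous w x n)
    (hy : IsWeightedHomogeneous w (y ^ 3) (2 • n)) (i j : Fin 2) :
    IsWeightedHomogeneous w (matrixE7 a b v x y i j) (!![m, n; 2 • n, m] i j) := by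
  have hxb : IsWeightedHomogeneous w (x * b) (2 • n) := two_nsmul n ▸ hx.mul hb
  fin_cases i <;> fin_cases j
  · exact hv.add ha
  · exact hx.neg.add hb
  · exact (((hx.pow 2).add hxb).add (hb.pow 2)).add hy
  · exact hv.neg.add ha

end Homogeneity

section Orbifold

variable {k : Type*} [CommRing k]

/-- The matrix `d¹` of the `E₇` orbifold equivalence over `k[u, v, x, y]`, where `u`, `v`, `x`, `y`
are `X 0`, `X 1`, `X 2`, `X 3`; as in `curveV`, `q` stands for `(t² - 10 t + 19) / 2`. -/
def orbifoldE7 (s t q : k) : Matrix (Fin 2) (Fin 2) (MvPolynomial (Fin 4) k) :=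
  matrixE7 (curveV (C t) (C q) (X 3) (C s * X 0)) (curveX (C t) (X 3) (C s * X 0))
    (X 1) (X 2) (X 3)

theorem det_orbifoldE7 {s t q : k} (hq : 2 * q = t ^ 2 - 10 * t + 19)
    (ht : t ^ 3 - 21 * t + 37 = 0) (hs : s ^ 18 * ((2 * t - 5) ^ 3 - q ^ 2) = 1) :
    (orbifoldE7 s t q).det = X 2 ^ 3 + X 2 * X 3 ^ 3 - X 0 ^ 18 - X 1 ^ 2 := by
  apply_fun (C : k → MvPolynomial (Fin 4) k) at hq ht hs
  simp only [map_add, map_sub, map_mul, map_pow, map_ofNat, map_zero, map_one] at hq ht hs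
  exact det_matrixE7_curve hq ht hs _ _ _ _

theorem isWeightedHomogeneous_orbifoldE7 {M : Type*} [AddCommMonoid M] (δ : M) (s t q : k)
    (i j : Fin 2) :
    IsWeightedHomogeneous ![δ, 9 • δ, 6 • δ, 4 • δ] (orbifoldE7 s t q i j)
      (!![9 • δ, 6 • δ; 12 • δ, 9 • δ] i j) := by
  have hX := isWeightedHomogeneous_X k ![δ, 9 • δ, 6 • δ, 4 • δ]
  have hz : IsWeightedHomogeneous ![δ, 9 • δ, 6 • δ, 4 • δ] (C s * X 0) δ := (hX 0).C_mul s
  have hy3 : IsWeightedHomogeneous ![δ, 9 • δ, 6 • δ, 4 • δ] (X 3 ^ 3 : MvPolynomial (Fin 4) k)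
      (2 • 6 • δ) := by
    have h3 : 3 • 4 • δ = 2 • 6 • δ := by abel
    exact h3 ▸ (hX 3).pow 3
  have h12 : 12 • δ = 2 • 6 • δ := by abel
  rw [h12]
  exact isWeightedHomogeneous_matrixE7 (isWeightedHomogeneous_curveV t q (hX 3) hz) (hX 1)
    (isWeightedHomogeneous_curveX t (hX 3) hz) (hX 2) hy3 i j

end Orbifold

theorem stmt4_general {k : Type*} [CommRing k] {M : Type*} [AddCommMonoid M] (δ : M) (s t q : k)
    (hq : 2 * q = t ^ 2 - 10 * t + 19) (ht : t ^ 3 - 21 * t + 37 = 0)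
    (hs : s ^ 18 * ((2 * t - 5) ^ 3 - q ^ 2) = 1) :
    (orbifoldE7 s t q).det = X 2 ^ 3 + X 2 * X 3 ^ 3 - X 0 ^ 18 - X 1 ^ 2 ∧
    orbifoldE7 s t q * (orbifoldE7 s t q).adjugate
      = (X 2 ^ 3 + X 2 * X 3 ^ 3 - X 0 ^ 18 - X 1 ^ 2 : MvPolynomial (Fin 4) k) •
        (1 : Matrix (Fin 2) (Fin 2) (MvPolynomial (Fin 4) k)) ∧
    (orbifoldE7 s t q).adjugate * orbifoldE7 s t q
      = (X 2 ^ 3 + X 2 * X 3 ^ 3 - X 0 ^ 18 - X 1 ^ 2 : MvPolynomial (Fin 4) k) •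
        (1 : Matrix (Fin 2) (Fin 2) (MvPolynomial (Fin 4) k)) ∧
    ∀ i j, IsWeightedHomogeneous ![δ, 9 • δ, 6 • δ, 4 • δ] (orbifoldE7 s t q i j)
      (!![9 • δ, 6 • δ; 12 • δ, 9 • δ] i j) := by
  have hdet := det_orbifoldE7 hq ht hs
  refine ⟨hdet, ?_, ?_, isWeightedHomogeneous_orbifoldE7 δ s t q⟩
  · rw [Matrix.mul_adjugate, hdet]
  · rw [Matrix.adjugate_mul, hdet]

theorem WHom.of_isWeightedHomogeneous {w : Fin 4 → ℚ} {q : ℚ} {p : R4}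
    (h : IsWeightedHomogeneous w p q) : WHom w q p := by
  intro m hm
  rw [← h (mem_support_iff.mp hm), Finsupp.weight_apply, Finsupp.sum_fintype _ _ (by simp)]
  simp only [nsmul_eq_mul]

theorem dE7_eq_orbifoldE7 (s t : ℂ) : dE7 s t = orbifoldE7 s t ((t ^ 2 - 10 * t + 19) / 2) := by
  -- An atom `q` keeps the division by `2` out of `C`.
  unfold dE7
  generalize (t ^ 2 - 10 * t + 19) / 2 = q
  ext1 i j
  fin_cases i <;> fin_cases j <;>
    simp only [orbifoldE7, matrixE7, curveV, curveX, u, v, x, y, Fin.zero_eta, Fin.mk_one,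
      Matrix.of_apply, Matrix.cons_val', Matrix.cons_val_zero, Matrix.cons_val_one,
      Matrix.cons_val_fin_one, map_sub, map_mul, map_pow, map_ofNat] <;> ring

theorem stmt4 (s t : ℂ) (ht : t ^ 3 - 21 * t + 37 = 0)
    (hs : s ^ 18 = 26220 * t ^ 2 + 67488 * t - 376912) :
    (dE7 s t).det = x ^ 3 + x * y ^ 3 - u ^ 18 - v ^ 2 ∧
    dE7 s t * (dE7 s t).adjugate
      = (x ^ 3 + x * y ^ 3 - u ^ 18 - v ^ 2) • (1 : Matrix (Fin 2) (Fin 2) R4) ∧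
    (dE7 s t).adjugate * dE7 s t
      = (x ^ 3 + x * y ^ 3 - u ^ 18 - v ^ 2) • (1 : Matrix (Fin 2) (Fin 2) R4) ∧
    ∀ i j, WHom ![1/9, 1, 2/3, 4/9] (!![(1 : ℚ), 2/3; 4/3, 1] i j) (dE7 s t i j) := by
  have hq : 2 * ((t ^ 2 - 10 * t + 19) / 2) = t ^ 2 - 10 * t + 19 := mul_div_cancel₀ _ two_ne_zero
  obtain ⟨hdet, hmul, hmul', hhom⟩ :=
    stmt4_general (1 / 9 : ℚ) s t _ hq ht (pow_eighteen_mul_eq_one two_ne_zero hq ht hs)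
  have hweights : (![1/9, 9 • (1/9), 6 • (1/9), 4 • (1/9)] : Fin 4 → ℚ) = ![1/9, 1, 2/3, 4/9] := by
    norm_num
  have hdegrees : !![9 • (1/9 : ℚ), 6 • (1/9); 12 • (1/9), 9 • (1/9)] = !![1, 2/3; 4/3, 1] := by
    norm_num
  rw [hweights, hdegrees] at hhom
  rw [dE7_eq_orbifoldE7]
  exact ⟨hdet, hmul, hmul', fun i j => .of_isWeightedHomogeneous (hhom i j)⟩
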